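/- Suppose that for every multi-level apportionment instance whose tree is a full binary tree (every node has exactly 0 or 2 children) and every non-negative integer h, there exists an allocation of h seats that fulfills both upper quota and lower quota. Then for every multi-level apportionment instance with an arbitrary tree and every non-negative integer h, there exists an allocation of h seats that fulfills both upper quota and lower quota. -/

import Mathlib

/-- A multi-level apportionment instance: a rooted tree on nodes `0, …, n`
(root `0`, encoded by a parent function with `parent i < i` for `i ≠ 0`),
together with entitlements `W`. -/
structure MLA where
  n : ℕ
  parent : Fin (n + 1) → Fin (n + 1)
  parent_lt : ∀ i : Fin (n + 1), i ≠ 0 → (parent i : ℕ) < (i : ℕ)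
  W : Fin (n + 1) → ℝ
  W_pos : ∀ i, 0 < W i
  W_le_one : ∀ i, W i ≤ 1
  W_root : W 0 = 1
  W_sum : ∀ i : Fin (n + 1),
    (Finset.univ.filter (fun c => c ≠ 0 ∧ parent c = i)).Nonempty →
    ∑ c ∈ Finset.univ.filter (fun c => c ≠ 0 ∧ parent c = i), W c = 1

namespace MLA

variable (T : MLA)

/-- The set of children of node `i`. -/
def children (i : Fin (T.n + 1)) : Finset (Fin (T.n + 1)) :=
  Finset.univ.filter (fun c => c ≠ 0 ∧ T.parent c = i)

/-- The ancestor set `A(i)`: `A(0) = {0}` and `A(i) = {parent i} ∪ A(parent i)`. -/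
def ancestors (i : Fin (T.n + 1)) : Finset (Fin (T.n + 1)) :=
  if h : i = 0 then {0} else insert (T.parent i) (ancestors (T.parent i))
termination_by (i : ℕ)
decreasing_by exact T.parent_lt i h

/-- The entitlement of node `i` relative to the root: `R i = ∏_{a ∈ A(i) ∪ {i}} W a`. -/
def R (i : Fin (T.n + 1)) : ℝ := ∏ a ∈ insert i (T.ancestors i), T.W a

/-- `V` is an allocation of `h` seats. -/
def IsAlloc (h : ℕ) (V : Fin (T.n + 1) → ℕ) : Prop :=
  V 0 = h ∧ ∀ i, (T.children i).Nonempty → V i = ∑ c ∈ T.children i, V c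

/-- `V` fulfills lower quota: `V i ≥ LQ i = max_{a ∈ A(i)} ⌊(R i / R a) · V a⌋`. -/
def FulfillsLowerQuota (V : Fin (T.n + 1) → ℕ) : Prop :=
  ∀ i, ∀ a ∈ T.ancestors i, ⌊T.R i / T.R a * (V a : ℝ)⌋ ≤ (V i : ℤ)

/-- `V` fulfills upper quota: `V i ≤ UQ i = min_{a ∈ A(i)} ⌈(R i / R a) · V a⌉`. -/
def FulfillsUpperQuota (V : Fin (T.n + 1) → ℕ) : Prop :=
  ∀ i, ∀ a ∈ T.ancestors i, (V i : ℤ) ≤ ⌈T.R i / T.R a * (V a : ℝ)⌉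


/-- `P` is the set of nodes receiving the new seat in one step of an iterative
method with selection criterion `crit` (to be minimized among children) and
eligibility constraint `elig`: `P` is a root-to-leaf path, each non-root node on
the path is an eligible child of its parent minimizing `crit` among all eligible
children, and the seat counts along `P` each increase by one. -/
def IsStepWith (crit : (Fin (T.n + 1) → ℕ) → Fin (T.n + 1) → ℝ)
    (elig : (Fin (T.n + 1) → ℕ) → Fin (T.n + 1) → Prop)
    (P : Finset (Fin (T.n + 1))) (Vh Vh1 : Fin (T.n + 1) → ℕ) : Prop :=
  (0 : Fin (T.n + 1)) ∈ P ∧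
  (∀ i ∈ P, i ≠ 0 → T.parent i ∈ P) ∧
  (∀ i ∈ P, (T.children i).Nonempty → ∃ c ∈ T.children i, c ∈ P) ∧
  (∀ c ∈ P, ∀ d ∈ P, c ≠ 0 → d ≠ 0 → T.parent c = T.parent d → c = d) ∧
  (∀ c ∈ P, c ≠ 0 → elig Vh c ∧
    ∀ d ∈ T.children (T.parent c), elig Vh d → crit Vh c ≤ crit Vh d) ∧
  (∀ i, Vh1 i = Vh i + if i ∈ P then 1 else 0)

/-- `V : ℕ → (nodes → ℕ)` is a run of the iterative method given by `crit` and
`elig` (with arbitrary tie-breaking): `V 0` is the all-zero allocation and each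
`V (h+1)` is obtained from `V h` by allocating one more seat along a path. -/
def IsRun (crit : (Fin (T.n + 1) → ℕ) → Fin (T.n + 1) → ℝ)
    (elig : (Fin (T.n + 1) → ℕ) → Fin (T.n + 1) → Prop)
    (V : ℕ → Fin (T.n + 1) → ℕ) : Prop :=
  (∀ i, V 0 i = 0) ∧ ∀ h, ∃ P, T.IsStepWith crit elig P (V h) (V (h + 1))

/-- Adams' criterion: a child `c` minimizing `V c / R c` receives the seat. -/
noncomputable def adamsCrit (V : Fin (T.n + 1) → ℕ) (c : Fin (T.n + 1)) : ℝ :=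
  (V c : ℝ) / T.R c

/-- Jefferson's criterion: a child `c` minimizing `(V c + 1) / R c` receives the seat. -/
noncomputable def jeffersonCrit (V : Fin (T.n + 1) → ℕ) (c : Fin (T.n + 1)) : ℝ :=
  ((V c : ℝ) + 1) / T.R c

/-- Trivial eligibility constraint: every child is eligible. -/
def trivElig (_ : Fin (T.n + 1) → ℕ) (_ : Fin (T.n + 1)) : Prop := True

/-- Eligibility constraint of the quota method: `V c / W c < V (parent c) + 1`. -/
def quotaElig (V : Fin (T.n + 1) → ℕ) (c : Fin (T.n + 1)) : Prop :=
  (V c : ℝ) / T.W c < (V (T.parent c) : ℝ) + 1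

/-- Eligibility constraint of the upper-compliant quota method:
`V c / R c < (V a + 1) / R a` for every ancestor `a` of `c`. -/
def ucElig (V : Fin (T.n + 1) → ℕ) (c : Fin (T.n + 1)) : Prop :=
  ∀ a ∈ T.ancestors c, (V c : ℝ) / T.R c < ((V a : ℝ) + 1) / T.R a

end MLA

/-- The tree of `T` is a full binary tree: every node has 0 or 2 children. -/
def MLA.FullBinary (T : MLA) : Prop :=
  ∀ i, (T.children i).card = 0 ∨ (T.children i).card = 2

/-!
Quota-fulfilling allocations pull back along any map of node sets that preserves the root, the
entitlements relative to the root, the ancestor relation (weakly) and the additivity of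
allocations. Two operations on trees come with such a map. Gathering at least two, but not all, of
the children of a node below a new node gives an inclusion of the old tree into the new one and
lowers the total number of children in excess of two. Merging an only child into its parent gives a
retraction of the old tree onto the new one, because the entitlement of an only child is `1`.
Merging as long as there are only children and then gathering ends in a full binary tree.
-/

/-- A rooted tree on an arbitrary finite type of nodes. The numbering `parent i < i` of `MLA` is
relaxed to a `rank`, so that nodes can be added or removed without renumbering the others. -/
structure LabelledTree (ι : Type*) where
  root : ι
  parent : ι → ι
  rank : ι → ℕ
  rank_parent_lt : ∀ x, x ≠ root → rank (parent x) < rank x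

namespace LabelledTree

variable {ι : Type*} [Fintype ι]

/-- The set of children of a node. -/
def children [DecidableEq ι] (A : LabelledTree ι) (x : ι) : Finset ι :=
  Finset.univ.filter fun c => c ≠ A.root ∧ A.parent c = x

theorem mem_children [DecidableEq ι] {A : LabelledTree ι} {x c : ι} :
    c ∈ A.children x ↔ c ≠ A.root ∧ A.parent c = x := by
  simp only [children, Finset.mem_filter, Finset.mem_univ, true_and]

theorem card_sub_one_add_one (A : LabelledTree ι) : Fintype.card ι = Fintype.card ι - 1 + 1 :=
  (Nat.sub_add_cancel (Fintype.card_pos_iff.2 ⟨A.root⟩)).symm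

/-- A numbering of the nodes by increasing rank. -/
noncomputable def numbering (A : LabelledTree ι) : ι ≃ Fin (Fintype.card ι - 1 + 1) :=
  let e := Fintype.equivFinOfCardEq A.card_sub_one_add_one
  e.trans (Tuple.sort (A.rank ∘ e.symm)).symm

theorem numbering_lt_numbering (A : LabelledTree ι) {x y : ι} (hxy : A.rank x < A.rank y) :
    A.numbering x < A.numbering y := by
  let e := Fintype.equivFinOfCardEq A.card_sub_one_add_one
  refine (Tuple.monotone_sort (A.rank ∘ e.symm)).reflect_lt ?_
  simpa [numbering, e] using hxy

theorem numbering_root (A : LabelledTree ι) : A.numbering A.root = 0 := by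
  obtain ⟨x, hx⟩ := A.numbering.surjective 0
  suffices x = A.root by rw [← this, hx]
  by_contra hne
  have hlt := A.numbering_lt_numbering (A.rank_parent_lt x hne)
  exact Fin.not_lt_zero _ (hx ▸ hlt)

theorem filter_numbering_eq_map_children [DecidableEq ι] (A : LabelledTree ι) (x : ι) :
    (Finset.univ.filter fun i => i ≠ 0 ∧
      A.numbering (A.parent (A.numbering.symm i)) = A.numbering x) =
      (A.children x).map A.numbering.toEmbedding := by
  ext i
  obtain ⟨y, rfl⟩ := A.numbering.surjective i
  simp [mem_children, ← A.numbering_root]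

end LabelledTree

/-- A multi-level apportionment instance on an arbitrary finite type of nodes. -/
structure LabelledMLA (ι : Type*) [Fintype ι] [DecidableEq ι] extends LabelledTree ι where
  W : ι → ℝ
  W_pos : ∀ x, 0 < W x
  W_root : W root = 1
  W_sum : ∀ x, (toLabelledTree.children x).Nonempty → ∑ c ∈ toLabelledTree.children x, W c = 1

namespace MLA

variable {T T' : MLA}

theorem mem_children {i c : Fin (T.n + 1)} : c ∈ T.children i ↔ c ≠ 0 ∧ T.parent c = i := by
  simp only [children, Finset.mem_filter, Finset.mem_univ, true_and]

theorem sum_W_children {i : Fin (T.n + 1)} (hi : (T.children i).Nonempty) :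
    ∑ c ∈ T.children i, T.W c = 1 :=
  T.W_sum i hi

@[elab_as_elim]
theorem parent_induction {p : Fin (T.n + 1) → Prop} (root : p 0)
    (step : ∀ i, i ≠ 0 → p (T.parent i) → p i) (i : Fin (T.n + 1)) : p i := by
  induction i using WellFoundedLT.induction with
  | ind i ih =>
    by_cases hi : i = 0
    · exact hi ▸ root
    · exact step i hi (ih _ (T.parent_lt i hi))

/-- The set of nodes on the path from the root to `i`. Unlike `T.ancestors i`, it contains `i` even
when `i` is not the root. -/
def lineage (T : MLA) (i : Fin (T.n + 1)) : Finset (Fin (T.n + 1)) :=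
  insert i (T.ancestors i)

theorem self_mem_lineage (i : Fin (T.n + 1)) : i ∈ T.lineage i :=
  Finset.mem_insert_self _ _

theorem lineage_zero : T.lineage 0 = {0} := by
  rw [lineage, ancestors]
  simp

theorem ancestors_of_ne_zero {i : Fin (T.n + 1)} (hi : i ≠ 0) :
    T.ancestors i = T.lineage (T.parent i) := by
  rw [ancestors, dif_neg hi, lineage]

theorem lineage_of_ne_zero {i : Fin (T.n + 1)} (hi : i ≠ 0) :
    T.lineage i = insert i (T.lineage (T.parent i)) := by
  rw [lineage, ancestors_of_ne_zero hi]

theorem parent_mem_lineage {i : Fin (T.n + 1)} (hi : i ≠ 0) : T.parent i ∈ T.lineage i := by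
  rw [lineage_of_ne_zero hi]
  exact Finset.mem_insert_of_mem (self_mem_lineage _)

theorem le_of_mem_lineage {a i : Fin (T.n + 1)} (ha : a ∈ T.lineage i) : a ≤ i := by
  induction i using parent_induction with
  | root => simp_all [lineage_zero]
  | step i hi ih =>
    rw [lineage_of_ne_zero hi, Finset.mem_insert] at ha
    rcases ha with rfl | ha
    · exact le_rfl
    · exact (ih ha).trans (T.parent_lt i hi).le

theorem lineage_subset_lineage {a i : Fin (T.n + 1)} (ha : a ∈ T.lineage i) :
    T.lineage a ⊆ T.lineage i := by
  induction i using parent_induction with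
  | root => rw [lineage_zero, Finset.mem_singleton] at ha; rw [ha]
  | step i hi ih =>
    rw [lineage_of_ne_zero hi, Finset.mem_insert] at ha
    rcases ha with rfl | ha
    · exact subset_rfl
    · rw [lineage_of_ne_zero hi]
      exact (ih ha).trans (Finset.subset_insert _ _)

theorem R_pos (i : Fin (T.n + 1)) : 0 < T.R i :=
  Finset.prod_pos fun a _ => T.W_pos a

theorem R_zero : T.R 0 = 1 := by
  change ∏ a ∈ T.lineage 0, T.W a = 1
  rw [lineage_zero, Finset.prod_singleton, T.W_root]

theorem R_of_ne_zero {i : Fin (T.n + 1)} (hi : i ≠ 0) : T.R i = T.W i * T.R (T.parent i) := by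
  change ∏ a ∈ T.lineage i, T.W a = T.W i * ∏ a ∈ T.lineage (T.parent i), T.W a
  have hnot : i ∉ T.lineage (T.parent i) := fun h =>
    (T.parent_lt i hi).not_ge (le_of_mem_lineage h)
  rw [lineage_of_ne_zero hi, Finset.prod_insert hnot]

theorem FulfillsLowerQuota.floor_le {V : Fin (T.n + 1) → ℕ} (hV : T.FulfillsLowerQuota V)
    {a i : Fin (T.n + 1)} (ha : a ∈ T.lineage i) : ⌊T.R i / T.R a * (V a : ℝ)⌋ ≤ (V i : ℤ) := by
  rcases Finset.mem_insert.1 ha with rfl | ha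
  · simp [(R_pos a).ne']
  · exact hV i a ha

theorem FulfillsUpperQuota.le_ceil {V : Fin (T.n + 1) → ℕ} (hV : T.FulfillsUpperQuota V)
    {a i : Fin (T.n + 1)} (ha : a ∈ T.lineage i) : (V i : ℤ) ≤ ⌈T.R i / T.R a * (V a : ℝ)⌉ := by
  rcases Finset.mem_insert.1 ha with rfl | ha
  · simp [(R_pos a).ne']
  · exact hV i a ha

/-- There is an allocation of `h` seats that fulfills both quotas. -/
def HasQuotaAlloc (T : MLA) (h : ℕ) : Prop :=
  ∃ V : Fin (T.n + 1) → ℕ, T.IsAlloc h V ∧ T.FulfillsUpperQuota V ∧ T.FulfillsLowerQuota V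

/-- A map of node sets along which quota-fulfilling allocations pull back. It may send a node and
its parent to the same node, and it may send them to nodes with others in between. -/
structure IsQuotaMap (T T' : MLA) (φ : Fin (T.n + 1) → Fin (T'.n + 1)) : Prop where
  map_zero : φ 0 = 0
  map_parent_mem_lineage : ∀ i, i ≠ 0 → φ (T.parent i) ∈ T'.lineage (φ i)
  R_map_eq_W_mul : ∀ i, i ≠ 0 → T'.R (φ i) = T.W i * T'.R (φ (T.parent i))
  map_eq_sum : ∀ h V, T'.IsAlloc h V → ∀ i, (T.children i).Nonempty →
    V (φ i) = ∑ c ∈ T.children i, V (φ c)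

namespace IsQuotaMap

variable {φ : Fin (T.n + 1) → Fin (T'.n + 1)}

theorem R_map (hφ : IsQuotaMap T T' φ) (i : Fin (T.n + 1)) : T'.R (φ i) = T.R i := by
  induction i using parent_induction with
  | root => rw [hφ.map_zero, R_zero, R_zero]
  | step i hi ih => rw [hφ.R_map_eq_W_mul i hi, ih, R_of_ne_zero hi]

theorem map_mem_lineage (hφ : IsQuotaMap T T' φ) {a i : Fin (T.n + 1)} (ha : a ∈ T.lineage i) :
    φ a ∈ T'.lineage (φ i) := by
  induction i using parent_induction with
  | root =>
    rw [lineage_zero, Finset.mem_singleton] at ha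
    exact ha ▸ self_mem_lineage _
  | step i hi ih =>
    rw [lineage_of_ne_zero hi, Finset.mem_insert] at ha
    rcases ha with rfl | ha
    · exact self_mem_lineage _
    · exact lineage_subset_lineage (hφ.map_parent_mem_lineage i hi) (ih ha)

theorem hasQuotaAlloc (hφ : IsQuotaMap T T' φ) {h : ℕ} (hT' : T'.HasQuotaAlloc h) :
    T.HasQuotaAlloc h := by
  obtain ⟨V, halloc, hupper, hlower⟩ := hT'
  have map_mem {i a : Fin (T.n + 1)} (ha : a ∈ T.ancestors i) : φ a ∈ T'.lineage (φ i) :=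
    hφ.map_mem_lineage (Finset.mem_insert_of_mem ha)
  refine ⟨V ∘ φ, ⟨?_, hφ.map_eq_sum h V halloc⟩, fun i a ha => ?_, fun i a ha => ?_⟩
  · rw [Function.comp_apply, hφ.map_zero, halloc.1]
  · rw [← hφ.R_map i, ← hφ.R_map a]
    exact hupper.le_ceil (map_mem ha)
  · rw [← hφ.R_map i, ← hφ.R_map a]
    exact hlower.floor_le (map_mem ha)

end IsQuotaMap

end MLA

namespace LabelledMLA

variable {ι : Type*} [Fintype ι] [DecidableEq ι] (A : LabelledMLA ι)

theorem W_le_one (x : ι) : A.W x ≤ 1 := by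
  by_cases hx : x = A.root
  · rw [hx, A.W_root]
  · have hmem : x ∈ A.children (A.parent x) := LabelledTree.mem_children.2 ⟨hx, rfl⟩
    rw [← A.W_sum _ ⟨x, hmem⟩]
    exact Finset.single_le_sum (fun c _ => (A.W_pos c).le) hmem

/-- The instance obtained by numbering the nodes by increasing rank. -/
noncomputable def toMLA : MLA where
  n := Fintype.card ι - 1
  parent i := A.numbering (A.parent (A.numbering.symm i))
  parent_lt i hi := by
    obtain ⟨x, rfl⟩ := A.numbering.surjective i
    have hx : x ≠ A.root := by
      rintro rfl
      exact hi A.numbering_root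
    rw [Equiv.symm_apply_apply]
    exact A.numbering_lt_numbering (A.rank_parent_lt x hx)
  W i := A.W (A.numbering.symm i)
  W_pos _ := A.W_pos _
  W_le_one _ := A.W_le_one _
  W_root := by rw [← A.numbering_root, Equiv.symm_apply_apply, A.W_root]
  W_sum i hi := by
    obtain ⟨x, rfl⟩ := A.numbering.surjective i
    rw [A.filter_numbering_eq_map_children] at hi ⊢
    simpa using A.W_sum x (Finset.map_nonempty.1 hi)

/-- The node of `A.toMLA` that corresponds to a node of `A`. -/
noncomputable def node : ι ≃ Fin (A.toMLA.n + 1) :=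
  A.numbering

theorem node_root : A.node A.root = 0 :=
  A.numbering_root

theorem parent_node (x : ι) : A.toMLA.parent (A.node x) = A.node (A.parent x) :=
  congrArg (fun y => A.node (A.parent y)) (A.node.symm_apply_apply x)

theorem W_node (x : ι) : A.toMLA.W (A.node x) = A.W x :=
  congrArg A.W (A.node.symm_apply_apply x)

theorem children_node (x : ι) :
    A.toMLA.children (A.node x) = (A.children x).map A.node.toEmbedding :=
  A.filter_numbering_eq_map_children x

theorem card_children_node (x : ι) :
    (A.toMLA.children (A.node x)).card = (A.children x).card := by
  rw [children_node, Finset.card_map]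

variable {A}

theorem node_ne_zero {x : ι} (hx : x ≠ A.root) : A.node x ≠ 0 := fun h =>
  hx (A.node.injective (h.trans A.node_root.symm))

theorem parent_node_mem_lineage {x : ι} (hx : x ≠ A.root) :
    A.node (A.parent x) ∈ A.toMLA.lineage (A.node x) :=
  A.parent_node x ▸ MLA.parent_mem_lineage (node_ne_zero hx)

theorem R_node {x : ι} (hx : x ≠ A.root) :
    A.toMLA.R (A.node x) = A.W x * A.toMLA.R (A.node (A.parent x)) := by
  rw [MLA.R_of_ne_zero (node_ne_zero hx), W_node, parent_node]

theorem alloc_node_eq_sum {h : ℕ} {V : Fin (A.toMLA.n + 1) → ℕ} (hV : A.toMLA.IsAlloc h V) {x : ι}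
    (hx : (A.children x).Nonempty) : V (A.node x) = ∑ c ∈ A.children x, V (A.node c) := by
  rw [hV.2 (A.node x) (by rw [children_node]; exact hx.map), children_node, Finset.sum_map]
  rfl

end LabelledMLA

namespace MLA

/-- The total number of children in excess of two per node. By truncated subtraction, nodes with
fewer than two children count as `0`. -/
def excess (T : MLA) : ℕ :=
  ∑ j, ((T.children j).card - 2)

section Gather

variable (T : MLA) {i : Fin (T.n + 1)} {S : Finset (Fin (T.n + 1))}

/-- The tree obtained by gathering the set `S` of children of `i` below a new child `none` of `i`.
Old ranks are doubled to make room for the rank of the new node. -/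
def gatherTree (hS : S ⊆ T.children i) : LabelledTree (Option (Fin (T.n + 1))) where
  root := some 0
  parent
    | none => some i
    | some j => if j ∈ S then none else some (T.parent j)
  rank
    | none => 2 * i + 1
    | some j => 2 * j
  rank_parent_lt
    | none, _ => by simp
    | some j, hj => by
      have hlt := T.parent_lt j (by simpa using hj)
      by_cases hjS : j ∈ S
      · have hparent := (mem_children.1 (hS hjS)).2
        simp only [hjS, if_true]
        rw [hparent] at hlt
        omega
      · simp only [hjS, if_false]
        omega

variable {T}

theorem sum_W_pos (hne : S.Nonempty) : 0 < ∑ c ∈ S, T.W c :=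
  Finset.sum_pos (fun c _ => T.W_pos c) hne

variable (hS : S ⊆ T.children i)
include hS

theorem children_gatherTree_none : (T.gatherTree hS).children none = S.map .some := by
  ext (_ | j)
  · simp [LabelledTree.mem_children, gatherTree]
  · have hne_zero : j ∈ S → j ≠ 0 := fun hj => (mem_children.1 (hS hj)).1
    simpa [LabelledTree.mem_children, gatherTree] using hne_zero

theorem children_gatherTree_some_self :
    (T.gatherTree hS).children (some i) = (T.children i \ S).insertNone := by
  ext (_ | j)
  · simp [LabelledTree.mem_children, gatherTree]
  · by_cases hj : j ∈ S <;> simp [LabelledTree.mem_children, gatherTree, mem_children, hj]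

theorem children_gatherTree_some_of_ne {k : Fin (T.n + 1)} (hk : k ≠ i) :
    (T.gatherTree hS).children (some k) = (T.children k).map .some := by
  ext (_ | j)
  · simp [LabelledTree.mem_children, gatherTree, hk.symm]
  · by_cases hj : j ∈ S
    · have hparent := (mem_children.1 (hS hj)).2
      simp [LabelledTree.mem_children, gatherTree, mem_children, hj, hparent, hk.symm]
    · simp [LabelledTree.mem_children, gatherTree, mem_children, hj]

theorem card_children_gatherTree_none :
    ((T.gatherTree hS).children none).card = S.card := by
  rw [children_gatherTree_none, Finset.card_map]

theorem card_children_gatherTree_some_self :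
    ((T.gatherTree hS).children (some i)).card = (T.children i).card - S.card + 1 := by
  rw [children_gatherTree_some_self, Finset.card_insertNone, Finset.card_sdiff_of_subset hS]

theorem card_children_gatherTree_some_of_ne {k : Fin (T.n + 1)} (hk : k ≠ i) :
    ((T.gatherTree hS).children (some k)).card = (T.children k).card := by
  rw [children_gatherTree_some_of_ne hS hk, Finset.card_map]

variable (T) in
/-- The instance obtained by gathering the nonempty set `S` of children of `i` below a new child
`none` of `i`, whose entitlement is the joint entitlement of `S`. -/
noncomputable def gather (hne : S.Nonempty) : LabelledMLA (Option (Fin (T.n + 1))) where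
  toLabelledTree := T.gatherTree hS
  W
    | none => ∑ c ∈ S, T.W c
    | some j => if j ∈ S then T.W j / ∑ c ∈ S, T.W c else T.W j
  W_pos
    | none => sum_W_pos hne
    | some j => by
      have hsum : 0 < ∑ c ∈ S, T.W c := sum_W_pos hne
      have hj := T.W_pos j
      dsimp only
      split_ifs <;> positivity
  W_root := by
    have hroot : (0 : Fin (T.n + 1)) ∉ S := fun h => (mem_children.1 (hS h)).1 rfl
    simp only [gatherTree, hroot, if_false, T.W_root]
  W_sum
    | none, _ => by
      rw [children_gatherTree_none, Finset.sum_map, ← div_self (sum_W_pos hne).ne', Finset.sum_div]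
      exact Finset.sum_congr rfl fun c hc => if_pos hc
    | some k, hk => by
      by_cases hki : k = i
      · subst hki
        rw [children_gatherTree_some_self, Finset.sum_insertNone,
          ← sum_W_children (hne.mono hS), ← Finset.sum_sdiff hS, add_comm]
        congr 1
        exact Finset.sum_congr rfl fun c hc => if_neg (Finset.mem_sdiff.1 hc).2
      · rw [children_gatherTree_some_of_ne hS hki] at hk ⊢
        rw [Finset.sum_map, ← sum_W_children (Finset.map_nonempty.1 hk)]
        refine Finset.sum_congr rfl fun c hc => if_neg fun hcS => hki ?_
        rw [← (mem_children.1 hc).2, (mem_children.1 (hS hcS)).2]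

variable (hne : S.Nonempty)

theorem toLabelledTree_gather : (T.gather hS hne).toLabelledTree = T.gatherTree hS :=
  rfl

theorem parent_gather_none : (T.gather hS hne).parent none = some i :=
  rfl

theorem W_gather_none : (T.gather hS hne).W none = ∑ c ∈ S, T.W c :=
  rfl

theorem none_ne_root_gather : none ≠ (T.gather hS hne).root :=
  (Option.some_ne_none 0).symm

variable {j : Fin (T.n + 1)}

theorem some_ne_root_gather (hj : j ≠ 0) : some j ≠ (T.gather hS hne).root :=
  mt (Option.some_injective _ ·) hj

theorem parent_gather_of_mem (hj : j ∈ S) : (T.gather hS hne).parent (some j) = none :=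
  if_pos hj

theorem parent_gather_of_notMem (hj : j ∉ S) :
    (T.gather hS hne).parent (some j) = some (T.parent j) :=
  if_neg hj

theorem W_gather_of_mem (hj : j ∈ S) :
    (T.gather hS hne).W (some j) = T.W j / ∑ c ∈ S, T.W c :=
  if_pos hj

theorem W_gather_of_notMem (hj : j ∉ S) : (T.gather hS hne).W (some j) = T.W j :=
  if_neg hj

theorem node_some_parent_mem_lineage_gather (hj : j ≠ 0) :
    (T.gather hS hne).node (some (T.parent j)) ∈
      (T.gather hS hne).toMLA.lineage ((T.gather hS hne).node (some j)) := by
  have hparent := LabelledMLA.parent_node_mem_lineage (some_ne_root_gather hS hne hj)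
  by_cases hjS : j ∈ S
  · rw [parent_gather_of_mem hS hne hjS] at hparent
    have hgrandparent := LabelledMLA.parent_node_mem_lineage (none_ne_root_gather hS hne)
    rw [parent_gather_none] at hgrandparent
    rw [(mem_children.1 (hS hjS)).2]
    exact lineage_subset_lineage hparent hgrandparent
  · rwa [parent_gather_of_notMem hS hne hjS] at hparent

theorem R_node_some_gather (hj : j ≠ 0) :
    (T.gather hS hne).toMLA.R ((T.gather hS hne).node (some j)) =
      T.W j * (T.gather hS hne).toMLA.R ((T.gather hS hne).node (some (T.parent j))) := by
  rw [LabelledMLA.R_node (some_ne_root_gather hS hne hj)]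
  by_cases hjS : j ∈ S
  · rw [parent_gather_of_mem hS hne hjS, W_gather_of_mem hS hne hjS,
      LabelledMLA.R_node (none_ne_root_gather hS hne), parent_gather_none, W_gather_none,
      (mem_children.1 (hS hjS)).2, ← mul_assoc, div_mul_cancel₀ _ (sum_W_pos hne).ne']
  · rw [parent_gather_of_notMem hS hne hjS, W_gather_of_notMem hS hne hjS]

theorem alloc_node_some_gather_eq_sum {h : ℕ} {V : Fin ((T.gather hS hne).toMLA.n + 1) → ℕ}
    (hV : (T.gather hS hne).toMLA.IsAlloc h V) (hj : (T.children j).Nonempty) :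
    V ((T.gather hS hne).node (some j)) =
      ∑ c ∈ T.children j, V ((T.gather hS hne).node (some c)) := by
  by_cases hji : j = i
  · subst hji
    have hself : V ((T.gather hS hne).node (some j)) = V ((T.gather hS hne).node none) +
        ∑ c ∈ T.children j \ S, V ((T.gather hS hne).node (some c)) := by
      rw [LabelledMLA.alloc_node_eq_sum hV, toLabelledTree_gather, children_gatherTree_some_self,
        Finset.sum_insertNone]
      rw [toLabelledTree_gather, children_gatherTree_some_self]
      exact ⟨none, Finset.none_mem_insertNone⟩
    have hnone : V ((T.gather hS hne).node none) =
        ∑ c ∈ S, V ((T.gather hS hne).node (some c)) := by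
      rw [LabelledMLA.alloc_node_eq_sum hV, toLabelledTree_gather, children_gatherTree_none,
        Finset.sum_map]
      · rfl
      · rw [toLabelledTree_gather, children_gatherTree_none]
        exact hne.map
    rw [hself, hnone, add_comm, Finset.sum_sdiff hS]
  · rw [LabelledMLA.alloc_node_eq_sum hV, toLabelledTree_gather,
      children_gatherTree_some_of_ne hS hji, Finset.sum_map]
    · rfl
    · rw [toLabelledTree_gather, children_gatherTree_some_of_ne hS hji]
      exact hj.map

theorem isQuotaMap_gather :
    IsQuotaMap T (T.gather hS hne).toMLA fun j => (T.gather hS hne).node (some j) where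
  map_zero := (T.gather hS hne).node_root
  map_parent_mem_lineage _ := node_some_parent_mem_lineage_gather hS hne
  R_map_eq_W_mul _ := R_node_some_gather hS hne
  map_eq_sum _ _ hV _ := alloc_node_some_gather_eq_sum hS hne hV

theorem card_children_gather_ne_one (hlt : S.card < (T.children i).card) (h2 : 2 ≤ S.card)
    (hT : ∀ j, (T.children j).card ≠ 1) (j : Fin ((T.gather hS hne).toMLA.n + 1)) :
    ((T.gather hS hne).toMLA.children j).card ≠ 1 := by
  obtain ⟨_ | k, rfl⟩ := (T.gather hS hne).node.surjective j
  · rw [LabelledMLA.card_children_node, toLabelledTree_gather, card_children_gatherTree_none]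
    omega
  · rw [LabelledMLA.card_children_node, toLabelledTree_gather]
    by_cases hk : k = i
    · rw [hk, card_children_gatherTree_some_self]
      omega
    · rw [card_children_gatherTree_some_of_ne hS hk]
      exact hT k

theorem excess_gather_lt (hlt : S.card < (T.children i).card) (h2 : 2 ≤ S.card) :
    (T.gather hS hne).toMLA.excess < T.excess := by
  have hgather : (T.gather hS hne).toMLA.excess =
      (S.card - 2) + ∑ k, (((T.gatherTree hS).children (some k)).card - 2) := by
    rw [excess, ← (T.gather hS hne).node.sum_comp, Fintype.sum_option]
    simp only [LabelledMLA.card_children_node, toLabelledTree_gather,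
      card_children_gatherTree_none]
  have hrest : ∑ k ∈ Finset.univ.erase i, (((T.gatherTree hS).children (some k)).card - 2) =
      ∑ k ∈ Finset.univ.erase i, ((T.children k).card - 2) :=
    Finset.sum_congr rfl fun k hk => by
      rw [card_children_gatherTree_some_of_ne hS (Finset.ne_of_mem_erase hk)]
  rw [hgather, excess, ← Finset.add_sum_erase _ _ (Finset.mem_univ i),
    ← Finset.add_sum_erase _ _ (Finset.mem_univ i), hrest, card_children_gatherTree_some_self]
  omega

end Gather

theorem hasQuotaAlloc_of_card_children_ne_one {h : ℕ}
    (hbin : ∀ T : MLA, T.FullBinary → T.HasQuotaAlloc h) (T : MLA)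
    (hT : ∀ j, (T.children j).card ≠ 1) : T.HasQuotaAlloc h := by
  by_cases hfull : T.FullBinary
  · exact hbin T hfull
  · obtain ⟨i, hi⟩ : ∃ i, 2 < (T.children i).card := by
      by_contra! hle
      exact hfull fun i => by
        have hi_ne := hT i
        have hi_le := hle i
        omega
    obtain ⟨S, hS, hcard⟩ := Finset.exists_subset_card_eq hi.le
    have hne : S.Nonempty := Finset.card_pos.1 (by omega)
    exact (isQuotaMap_gather hS hne).hasQuotaAlloc <|
      hasQuotaAlloc_of_card_children_ne_one hbin _ <|
        card_children_gather_ne_one hS hne (hcard ▸ hi) hcard.ge hT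
termination_by T.excess
decreasing_by exact excess_gather_lt hS hne (hcard ▸ hi) hcard.ge

section Merge

variable (T : MLA) {c : Fin (T.n + 1)} (hc : c ≠ 0)

/-- The retraction of the nodes onto the nodes other than `c` that sends `c` to its parent. -/
def retract (x : Fin (T.n + 1)) : {j // j ≠ c} :=
  if hx : x = c then ⟨T.parent c, Fin.ne_of_lt (T.parent_lt c hc)⟩ else ⟨x, hx⟩

variable {T}

theorem coe_retract_self : (T.retract hc c : Fin (T.n + 1)) = T.parent c := by
  rw [retract, dif_pos rfl]

theorem retract_of_ne {x : Fin (T.n + 1)} (hx : x ≠ c) : T.retract hc x = ⟨x, hx⟩ :=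
  dif_neg hx

theorem retract_coe (j : {j // j ≠ c}) : T.retract hc j = j :=
  retract_of_ne hc j.2

theorem retract_parent_self : T.retract hc (T.parent c) = T.retract hc c :=
  Subtype.ext <| by
    rw [coe_retract_self, retract_of_ne hc (Fin.ne_of_lt (T.parent_lt c hc))]

theorem coe_retract_le (x : Fin (T.n + 1)) : (T.retract hc x : Fin (T.n + 1)) ≤ x := by
  by_cases hx : x = c
  · rw [hx, coe_retract_self]
    exact (T.parent_lt c hc).le
  · rw [retract_of_ne hc hx]

theorem injOn_retract : Set.InjOn (T.retract hc) {x | x ≠ T.parent c} := by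
  intro x hx y hy hxy
  by_cases hxc : x = c <;> by_cases hyc : y = c <;> simp_all [retract]

variable (T) in
/-- The tree obtained by merging the node `c` into its parent. -/
def mergeTree : LabelledTree {j // j ≠ c} where
  root := ⟨0, hc.symm⟩
  parent j := T.retract hc (T.parent j)
  rank j := j.1
  rank_parent_lt j hj :=
    (coe_retract_le hc _).trans_lt (T.parent_lt j fun h => hj (Subtype.ext h))

theorem W_eq_one_of_children_eq_singleton {i : Fin (T.n + 1)} (hi : T.children i = {c}) :
    T.W c = 1 := by
  have hsum := sum_W_children (T := T) (i := i) (by simp [hi])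
  rwa [hi, Finset.sum_singleton] at hsum

theorem ne_of_mem_children_of_ne_parent {x j : Fin (T.n + 1)} (hx : x ≠ T.parent c)
    (hj : j ∈ T.children x) : j ≠ c := by
  rintro rfl
  exact hx (mem_children.1 hj).2.symm

variable (honly : T.children (T.parent c) = {c})
include honly

theorem parent_ne_parent_of_children_eq_singleton {x : Fin (T.n + 1)} (hx : x ≠ 0) (hxc : x ≠ c) :
    T.parent x ≠ T.parent c := fun h =>
  hxc (by simpa [honly] using mem_children.2 ⟨hx, h⟩)

theorem children_mergeTree_retract {x : Fin (T.n + 1)} (hx : x ≠ T.parent c) :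
    (T.mergeTree hc).children (T.retract hc x) = (T.children x).subtype (· ≠ c) := by
  ext ⟨j, hj⟩
  simp only [LabelledTree.mem_children, mergeTree, Finset.mem_subtype, mem_children, ne_eq,
    Subtype.mk.injEq]
  exact and_congr_right fun hj0 =>
    (injOn_retract hc).eq_iff (parent_ne_parent_of_children_eq_singleton honly hj0 hj) hx

variable (T) in
/-- The instance obtained by merging the only child `c` of a node into that node. -/
def merge : LabelledMLA {j // j ≠ c} where
  toLabelledTree := T.mergeTree hc
  W j := T.W j
  W_pos j := T.W_pos j
  W_root := T.W_root
  W_sum x hx := by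
    obtain ⟨j, hj⟩ := hx
    obtain ⟨hj0, rfl⟩ := LabelledTree.mem_children.1 hj
    have hj0 : (j : Fin (T.n + 1)) ≠ 0 := fun h => hj0 (Subtype.ext h)
    have hparent := parent_ne_parent_of_children_eq_singleton honly hj0 j.2
    change ∑ k ∈ (T.mergeTree hc).children (T.retract hc (T.parent j)), T.W k = 1
    rw [children_mergeTree_retract hc honly hparent,
      Finset.sum_subtype_of_mem T.W fun _ => ne_of_mem_children_of_ne_parent hparent]
    exact sum_W_children ⟨j, mem_children.2 ⟨hj0, rfl⟩⟩

theorem coe_ne_root_merge {j : {j // j ≠ c}} (hj : (j : Fin (T.n + 1)) ≠ 0) :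
    j ≠ (T.merge hc honly).root :=
  mt (congrArg Subtype.val) hj

theorem retract_zero : T.retract hc 0 = (T.merge hc honly).root :=
  retract_of_ne hc hc.symm

theorem node_retract_parent_mem_lineage_merge {x : Fin (T.n + 1)} (hx : x ≠ 0) :
    (T.merge hc honly).node (T.retract hc (T.parent x)) ∈
      (T.merge hc honly).toMLA.lineage ((T.merge hc honly).node (T.retract hc x)) := by
  by_cases hxc : x = c
  · subst hxc
    rw [retract_parent_self]
    exact self_mem_lineage _
  · rw [retract_of_ne hc hxc]
    exact LabelledMLA.parent_node_mem_lineage (coe_ne_root_merge hc honly hx)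

theorem R_node_retract_merge {x : Fin (T.n + 1)} (hx : x ≠ 0) :
    (T.merge hc honly).toMLA.R ((T.merge hc honly).node (T.retract hc x)) =
      T.W x * (T.merge hc honly).toMLA.R
        ((T.merge hc honly).node (T.retract hc (T.parent x))) := by
  by_cases hxc : x = c
  · subst hxc
    rw [retract_parent_self, W_eq_one_of_children_eq_singleton honly, one_mul]
  · rw [retract_of_ne hc hxc]
    exact LabelledMLA.R_node (coe_ne_root_merge hc honly hx)

theorem alloc_node_retract_merge_eq_sum {h : ℕ}
    {V : Fin ((T.merge hc honly).toMLA.n + 1) → ℕ}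
    (hV : (T.merge hc honly).toMLA.IsAlloc h V) {x : Fin (T.n + 1)}
    (hx : (T.children x).Nonempty) :
    V ((T.merge hc honly).node (T.retract hc x)) =
      ∑ j ∈ T.children x, V ((T.merge hc honly).node (T.retract hc j)) := by
  by_cases hxc : x = T.parent c
  · rw [hxc, honly, Finset.sum_singleton, retract_parent_self]
  · have hne : ∀ j ∈ T.children x, j ≠ c := fun _ => ne_of_mem_children_of_ne_parent hxc
    have hchildren : (T.merge hc honly).children (T.retract hc x) =
        (T.children x).subtype (· ≠ c) :=
      children_mergeTree_retract hc honly hxc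
    have hnonempty : ((T.children x).subtype (· ≠ c)).Nonempty := by
      obtain ⟨j, hj⟩ := hx
      exact ⟨⟨j, hne j hj⟩, Finset.mem_subtype.2 hj⟩
    rw [LabelledMLA.alloc_node_eq_sum hV (hchildren ▸ hnonempty), hchildren,
      ← Finset.sum_subtype_of_mem _ hne]
    simp only [retract_coe]

theorem isQuotaMap_merge :
    IsQuotaMap T (T.merge hc honly).toMLA fun x => (T.merge hc honly).node (T.retract hc x) where
  map_zero := by rw [retract_zero hc honly, LabelledMLA.node_root]
  map_parent_mem_lineage _ := node_retract_parent_mem_lineage_merge hc honly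
  R_map_eq_W_mul _ := R_node_retract_merge hc honly
  map_eq_sum _ _ hV _ := alloc_node_retract_merge_eq_sum hc honly hV

theorem n_toMLA_merge_lt : (T.merge hc honly).toMLA.n < T.n := by
  have hpos : 0 < (c : ℕ) := Fin.pos_iff_ne_zero.2 hc
  have hcard : (T.merge hc honly).toMLA.n = Fintype.card {j // j ≠ c} - 1 := rfl
  rw [hcard, Fintype.card_subtype_compl, Fintype.card_fin, Fintype.card_unique]
  omega

end Merge

end MLA

theorem reduction_to_full_binary_general {h : ℕ}
    (hbin : ∀ T : MLA, T.FullBinary → T.HasQuotaAlloc h) (T : MLA) : T.HasQuotaAlloc h := by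
  by_cases hT : ∀ j, (T.children j).card ≠ 1
  · exact MLA.hasQuotaAlloc_of_card_children_ne_one hbin T hT
  · push Not at hT
    obtain ⟨j, hj⟩ := hT
    obtain ⟨c, honly⟩ := Finset.card_eq_one.1 hj
    obtain ⟨hc, rfl⟩ := MLA.mem_children.1 (honly ▸ Finset.mem_singleton_self c)
    exact (MLA.isQuotaMap_merge hc honly).hasQuotaAlloc
      (reduction_to_full_binary_general hbin (T.merge hc honly).toMLA)
termination_by T.n
decreasing_by exact MLA.n_toMLA_merge_lt hc honly

/-- If every full-binary-tree instance admits, for every `h`,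
an allocation of `h` seats fulfilling both quotas, then so does every instance
with an arbitrary tree. -/
theorem reduction_to_full_binary
    (hbin : ∀ T : MLA, T.FullBinary → ∀ h : ℕ,
      ∃ V : Fin (T.n + 1) → ℕ,
        T.IsAlloc h V ∧ T.FulfillsUpperQuota V ∧ T.FulfillsLowerQuota V) :
    ∀ T : MLA, ∀ h : ℕ,
      ∃ V : Fin (T.n + 1) → ℕ,
        T.IsAlloc h V ∧ T.FulfillsUpperQuota V ∧ T.FulfillsLowerQuota V := by
  exact fun T h => reduction_to_full_binary_general (fun T' hT' => hbin T' hT' h) T
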